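/- For every n ≥ 7, no Condorcet domain on an n-element set is (5,19)-abundant: every Condorcet domain D on an n-element set X (n ≥ 7) has a 5-element subset A ⊆ X such that the restriction of D to A contains at most 18 distinct linear orders. -/

import Mathlib

/-- `r` is a strict total order on `X`, supported on `X` (i.e. `r` never relates
elements outside `X`). -/
def IsLinearOrderOn {α : Type*} (X : Set α) (r : α → α → Prop) : Prop :=
  (∀ a b, r a b → a ∈ X ∧ b ∈ X) ∧
  (∀ a ∈ X, ¬ r a a) ∧
  (∀ a ∈ X, ∀ b ∈ X, ∀ c ∈ X, r a b → r b c → r a c) ∧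
  (∀ a ∈ X, ∀ b ∈ X, a ≠ b → r a b ∨ r b a)

/-- A domain on `X` is a set of linear orders on `X`. -/
def IsDomainOn {α : Type*} (X : Set α) (D : Set (α → α → Prop)) : Prop :=
  ∀ r ∈ D, IsLinearOrderOn X r

/-- The restriction of the order `r` to the subset `A`. -/
def restrictRel {α : Type*} (A : Set α) (r : α → α → Prop) : α → α → Prop :=
  fun a b => a ∈ A ∧ b ∈ A ∧ r a b

/-- The restriction of the domain `D` to the subset `A`: the set of linear orders
on `A` induced by the orders in `D`. -/
def restrictDom {α : Type*} (A : Set α) (D : Set (α → α → Prop)) :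
    Set (α → α → Prop) :=
  restrictRel A '' D

/-- `D` is `(k,s)`-abundant on `X`: its restriction to every `k`-element subset of `X`
contains at least `s` distinct linear orders. -/
def IsAbundant {α : Type*} (X : Set α) (D : Set (α → α → Prop)) (k s : ℕ) : Prop :=
  ∀ A : Set α, A ⊆ X → A.ncard = k → s ≤ (restrictDom A D).ncard

/-- `D` is exactly `(k,s)`-abundant: `(k,s)`-abundant but not `(k,s+1)`-abundant. -/
def IsExactlyAbundant {α : Type*} (X : Set α) (D : Set (α → α → Prop)) (k s : ℕ) : Prop :=
  IsAbundant X D k s ∧ ¬ IsAbundant X D k (s + 1)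

/-- The number of orders in the profile `R` that rank `a` above `b`. -/
noncomputable def majCount {α : Type*} (R : List (α → α → Prop)) (a b : α) : ℕ :=
  Nat.card {i : Fin R.length // (R.get i) a b}

/-- More than half of the orders in the profile `R` rank `a` above `b`. -/
def MajPrefers {α : Type*} (R : List (α → α → Prop)) (a b : α) : Prop :=
  R.length < 2 * majCount R a b

/-- `D` is a Condorcet domain on `X`: it is a domain on `X` and for every profile
(list of orders from `D`) of odd length, the majority relation is transitive on `X`. -/
def IsCondorcetDomain {α : Type*} (X : Set α) (D : Set (α → α → Prop)) : Prop :=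
  IsDomainOn X D ∧
  ∀ R : List (α → α → Prop), (∀ r ∈ R, r ∈ D) → Odd R.length →
    ∀ a ∈ X, ∀ b ∈ X, ∀ c ∈ X,
      MajPrefers R a b → MajPrefers R b c → MajPrefers R a c

/-- A maximal Condorcet domain on `X`. -/
def IsMaximalCondorcetDomain {α : Type*} (X : Set α) (D : Set (α → α → Prop)) : Prop :=
  IsCondorcetDomain X D ∧
  ∀ D' : Set (α → α → Prop), D ⊆ D' → IsCondorcetDomain X D' → D' = D

def mk00 : ℕ := 5575186299632655785383929856392466528206850
def mk01 : ℕ := 9025120251962256766228535454774148054976080787743067428893661380402520416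
def mk02 : ℕ := 367725059157240568086922027039556808868984440096267440897597468503382836245
def mk03 : ℕ := 56539537859886408956745185462596074639366597367078163931604342643718357120
def mk04 : ℕ := 437087148038445354947413689116796227886039288095896083479134208
def mk05 : ℕ := 19023131313740067415389966878307119613092330465398357803083426453399607816
def mk10 : ℕ := 11498821742992352562194780379275697745559552
def mk11 : ℕ := 6582219096540356554535924863825222674441563004180557978059407360
def mk12 : ℕ := 283278029147669836491313496471378549213135309589268622872416848911379274472
def mk13 : ℕ := 50359250316911778894612494323827856789610896812599007356939893950231224595
def mk14 : ℕ := 154742505054787722438279168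
def mk15 : ℕ := 118675569112102553890857812840433310363521456171132322760159823271056917508
def mk20 : ℕ := 803469022129495851394838032994770520619204810365736251826176
def mk21 : ℕ := 263292424817276880902457285700222111471318337338181921528343554080671563840
def mk22 : ℕ := 113637361545005806553865131758338594557563519580393488773333092210277875984
def mk23 : ℕ := 56539537866468653163608102977097762551474545142094502124244449233767301250
def mk24 : ℕ := 55217340769264848303693534014199561669764077858790713325255873594916868
def mk25 : ℕ := 18788307013744979436067816724663077071776716691109130935074470396347178537
def mk30 : ℕ := 52861834688581461027563567581414494960591508691513078774110355968
def mk31 : ℕ := 110427948130868117139312636914419285559078232507792369782642329684318208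
def mk32 : ℕ := 226701826372958269123697653995654079362831908029115549713728643705235309800
def mk33 : ℕ := 152172113948742320613638999602300763688411318643139729149759081319843782678
def mk34 : ℕ := 15018213530589609792430529169843496650691540745084428315966517088886980864
def mk35 : ℕ := 58310266729983486037836203757910813482927536989719445038381224313149915137
def mk40 : ℕ := 441711766194596082395824375185729628977640161653044050044523535640035328
def mk41 : ℕ := 434321056258602511100136779688195225969623536820738785189716306305155
def mk42 : ℕ := 63909335704143252498266059660058142715285453334941870401089834564550987328
def mk43 : ℕ := 15018429216745166486606023911338079451857485178227932667521257881733992472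
def mk44 : ℕ := 46768052394588893382517914646921056629007021244416
def mk45 : ℕ := 372942937575127114703545105338773105471595946783884138500633752825658097956
def mk50 : ℕ := 151152620939976065941504
def mk51 : ℕ := 58307250163871274820065994911151008989879484198023817426167890049075585154
def mk52 : ℕ := 279167268827153628905030971477403518969541500278304623051491434588485452368
def mk53 : ℕ := 114072063626388098714597575546210998146215906634866943125679623721466763528
def mk54 : ℕ := 158456325028528675255807377408
def mk55 : ℕ := 766265965853385933629618255421613946198986330506593494642623940009542693
def mk60 : ℕ := 56539106494157465220894266815445503241161213975600188262087843458607742976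
def mk61 : ℕ := 120260579601520030004325604394726807103978061847517984729807987804706218340
def mk62 : ℕ := 256505263430381360139935975665946698634586321407982077398451805457128637952
def mk63 : ℕ := 431359146950616505531566125192277720170984700809330748151964020768770
def mk64 : ℕ := 730750818666780687097627332231045598363357544448
def mk65 : ℕ := 19007467698060582391662781017192120127609422286730061326989800483089750169
def mk70 : ℕ := 28269553036457363149421277992437780177424424675214947735933273602512650240
def mk71 : ℕ := 110427948130868117139312648332400827208051532342828515676690137393692672
def mk72 : ℕ := 58810699641931613600322933181567070346121179533566607193821403730714631400
def mk73 : ℕ := 361545202974643743549100971367775644362246081914656619092228852669067845894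
def mk74 : ℕ := 2535310871863015720026804060160
def mk75 : ℕ := 3576964982102799957339665000074244338836137409066578878455247364417782289
def mk80 : ℕ := 5986310706507378352967363677206808166116686508851200
def mk81 : ℕ := 56539540393963678562206681082527602831658997224521229286606404354054365314
def mk82 : ℕ := 138041208658715695333140601507234447734083499454055225306380776355713402437
def mk83 : ℕ := 1325135305217436030756647292869573186568976174483991386250400323183876120
def mk84 : ℕ := 1766847064778384329583297500742918515993637396348733442234582083827662848
def mk85 : ℕ := 254640117160591194117630946496106090405177799987072067049492907727622504736
def mk90 : ℕ := 23945242826029513494925922035780823050530740051640320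
def mk91 : ℕ := 3885181065516992207452909815745321679372514803925374807712734447149186
def mk92 : ℕ := 319841699846598494721162414486892235737086275245817451286786017379787147328
def mk93 : ℕ := 128207069304110412600529659597555676700248544399070426049277599451118604552
def mk94 : ℕ := 19342813113834066795298817
def mk95 : ℕ := 4260194251491964059400687953097452779326759518411526932095493158710822452
def pk00 : ℕ := 76734755995275583309869152660434553628946668170039429345416586230634347789240711514242630045236249173210367771583794519345312538522798215056804815776749815944356001214989258763753703073447530496988881751927729362177843559830795443849468840346850623488888940271267242682398602016643674603
def pk01 : ℕ := 76734755995275582244960495440675663069007441036967484418044248694975030821092471245037235516043106704344767112714440584231717309293131259191007999965271107670184745920027295261141746190733019278862294160108384771278500574083195330702996055658279731331782917030790115412712487306929158579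
def pk02 : ℕ := 76734755995275583309869152660434553628946668170039429345416586230634347789240711514242630045236249173210367771583794519345312566862412668872215101173458772800741480810962871399906725768921745295111500228062610371148678296447773121513110553739325518343235195686750592915972999162709436667
def pk03 : ℕ := 76734755995275583309869152660434553628946668170039429345416586277267312525719890570595394219543387867915786741979595812468182411543874475685203787778598687638601264785919806537303572529896588403277514853240931934179839398230918524967221981506013317359773885270671025767897221063895414607
def pk04 : ℕ := 76734755995275582244960495440675663069007441036967484418044248741607995557571650301389999690350245399050186083110241877354587182314207519819406971967119979364430009490957843034691615647182077185150927261421587343280496412483318411820749196817442425202667862030193898498211106354180898583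
def pk05 : ℕ := 76734755995275583309869152660434553628946668170039429345416586277267312525719890570595394219543387867915786741979595812468182439883488929500614073175307644494986744381893419173456595225370803201400133329375812943150674134847896202630863694898488212214120140686154376001471618209961176671
def pk10 : ℕ := 76734755995258135846429264130771619585551332637775209519470291566722717955944346352293880498310268865073315430612376887020475128676314788543503755138090577432472685354898441700560682040961002868878418458977886557148076056444480311378329723750426196049125196577025091318595736895033691965
def pk11 : ℕ := 76135302301812202748962014190342824778839181863664743287019060151659862770021734086305391300535357721537087866493154175627016418814964780282983854385960058247309256401695352309585592414612314165608716056391684334839253738401534665590924167240622617277151043255288869311929545119459958652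
def pk12 : ℕ := 76734755995258136911272424630171054576243293095761013008344139619548547984621915643619880321000111885534927747661707632216554358720936462242157003147104648434837557280189112823888845253905021753146225720871487596058439077234370440791075925642010385268256327871831991971502529761863687033
def pk13 : ℕ := 76734755995275582244960999261601505034924781484415447423814552006553445592802258643230405862123256727607746252291872839381262197574101667810634149391903837153400437867631448263953170864571879737490355383426290344153920841919495311880389397412947512619766699305148504808632574563641306295
def pk14 : ℕ := 76135302301829649147493749321172710228212630710304981191363320591490590406879646377241916664348345584071518688172650127987803487712751659550114248639773317968237008914428358872978081238223191034220652980840088121845098523876549666092983840903143933847792545983412282801966382788067572982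
def pk15 : ℕ := 76734755995275583309804159761000940025616741942401250912688400059379275621479827934556405684813099748069358569341203584577341427618723341509287397400917908155765309792922119387281334077515898621758162645319891383064283862709385441293135599304531701838897830599955405461539367430471301363
def pk20 : ℕ := 76734755995275583309869152660434553628946668170039429345416586277267312525719890570555894561983442051731262341892703852192349641888175616553346218680957018617504962586219666043532135286327141068080911103182384191926758244591667618983584308214282942103354921114650397579264232381849533418
def pk21 : ℕ := 76734755995275583309869148693340649361498555619621164277974293767637391157619096106933201584587787958329322981289145131039713659660436687807852205306386333254884480984481836595735680848293804238449568606095828139270331807090296127516192433238768378049630917304791618102530733215203506616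
def pk22 : ℕ := 76734755995275583309869152660434553628946668170039429345416586277267312525719890570555894561983442051731262341892703852192349670227790070368756504101672027663059979088228423792010988926239990653536621616046029979458756728446383072744637315360122542988488413584786565590718710107118234618
def pk23 : ℕ := 76734755995275583309869152660434553628946668170039429345416586277267312525719890570595394219543387867915786741979595812468182411543874475685203787778597222604297563812588807448314081375050912061637175956466186283970807613882010653240566803826224370912656529857347332378308027562897929807
def pk24 : ℕ := 76734755995275583309869148693340649361498555619621164277974293767637391157619096106972701242147733774513847381376037091315546429316135546939709774404026537241677082210850978000517626937017575232005833459379630231314381176380639161773174928850709806858932526047488552901574528396251903005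
def pk25 : ℕ := 76734755995275583309869152660434553628946668170039429345416586277267312525719890570595394219543387867915786741979595812468182439883488929500614073199312231649852580314597565196792935014963761647092886469329832071502806097736726107001619810972063971797790022327483500389762505288166631007
def pk30 : ℕ := 76730072763295535892637036371680283283375028003034155080872713363416826465189607918559714914618936787643253857625821721647650313462801462863832432208506514678593255680890696215800878929953035307549190542684071725014192368468365456887546897632757419553112540087445800301252174020933836233
def pk31 : ℕ := 76135302304028165857482430206082495147051559216428235538853391677150938106537141772012735741181855624237241529425469828472822916829357289199276976337371729138228954650175171615589449058390364125672732695670978639923412011623780817799666898529280082287389810110826724515828318043925110776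
def pk32 : ℕ := 76730109065203315974080735399667972506287139966103448458008575461974075196964357899039546263277941132956363172341123859306146281430610703569870173588280533175735298083172401189741937249398801370265116889378957381070896022632733208558902823823031504239750816684521557931128823997103758201
def pk33 : ℕ := 76734719407525873376168446132393477299117795256534450431036070977026485909268268546321925802336268517853155724220535012402906377856841051200808498803808383020943822499949696588071539562282798949849794004911183258345216723805411118439595736026091991070836506916535907005640133838451113159
def pk34 : ℕ := 76139948948258503341013839966795689162794326469928530889016749290760597550615802399774946628899187354447143396020183119228078981223396877536253042932673597480579521469234171987860109690720127767973336157898090173254436366960826479351715736922614653805113776939916831220216277861442387702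
def pk35 : ℕ := 76734755709433653457612145160381166522029907219603743808171933075583734641043018526801757150995272863166265038935837150061402345824650291906846240183582401518085864902231401562012597881728565012565720351606068914401920377969778870110951662216366075757474783513611664635516783814621035127
def pk40 : ℕ := 76734755995258136911207931585053613508644523373668724120717174855729918514017750925315076645699327113852396312250825043800745295626899066111631263031616439916043947537542800730715823478503408773254791621414119077443785575483427785809023979775068861076325873023893545564186668737187499574
def pk41 : ℕ := 76730108781577349230344647736281974612707352618670999267474808110149307313556963867139783052173412590820325246612935078601703743613598195755601420019298168745633360061534379493257026226923015069717197579034077233269130211158031721819781176742262295415778585187931735407634329656511389303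
def pk42 : ℕ := 76734755995258136911207935551903523478254415817037112295666611026510062974060809969382306635785511869544818418965189718645249985347083083093844995781241828591415177052220173484144204712782633475975006950748847994992737716965088522850039418147295114498819307163770459402336678628778859121
def pk43 : ℕ := 76734755995275583309869148693342526240705811422412945367080544780426711050663379034926560655304726494979673956094967104746699829606899900051432013375087933548110167205815337330567095030668701617463567406148140714467908470386255301306698810550122912485286736080306862540297611322438954430
def pk44 : ℕ := 76730108781594795629005864844570887344768640667415220513838178034846099850202591976751267061778811971947602890457077139547658277593599029695402170362769662377699579729806916093108297779088307913925973363768098870293253106060859237317456007517316346824739448244345052383745272241762844159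
def pk45 : ℕ := 76734755995275583309869152660192436210315703865781333542029980951206855510706438078993790645390911250672096062809331779591204519327083917033645746124713322223481396720492710083995476264947926320183782735482869632016860611867916038347714248922349165907780170220183776378447621214030313977
def pk50 : ℕ := 76734755995275583309869152660434553628946668170039429345416586230634347789240711514203130387676303357025910286519619632089787090222798598944476122548051826324884515607016415654901633946219885772084929044635254606307673998977549232330558834816872388703543667658538960421230807793780192766
def pk51 : ℕ := 76734719405309910267647526295727964964988077456322995173431436139956995801043073462421411015609620591890023181071339305223326039558275217203198923767835333855700785625233504694994800127341653476847558272068946048403236103146537839239317733879293612113053165733596020077778124089697041895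
def pk52 : ℕ := 76734755995275583309869152660434553628946668170039429345416586230634347789240711514242630045236249173210400969734600855039695165373657979935964700055501024252732177047799026355064075819076655593703543290894176024485554578544874666191637787490630467554533767570437062105438762674972817503
def pk53 : ℕ := 76734755995275583309869152660434553628946668170039429345416586277267312525719890570555894561983442051731262601253256053008120718224587153907066200443744843906256033382906873102398261419683358135499633890530363203618319352783796369905399437576898316811392260943613447455841049384081942522
def pk54 : ℕ := 76734719405309910267647526295727964964988077456322995173431436186589960537522252518774175189916759286595375495804975726141659667560063772165789001663528351437072303401123962142491427600805125840262263117964054645713881456952784976814158336639319540220901759018670507112388365679998791651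
def pk55 : ℕ := 76734755995275583309869152660434553628946668170039429345416586277267312525719890570595394219543387867915753284468237275958028793375446534898554777951194041834103694823689483802560703292540127957118248136789284621796199932351121803766478390250656395662382360855511549140049004265274567259
def pk60 : ℕ := 76734755995275583309869152660434553628946668170039224251468724615784071558085651519121122430781037245884559501767459926153909579783451655875384458173395112900074677413538282934992910745499912449653591218839757772777263652934651769358016234801876703979326486485117399190190182750154310633
def pk61 : ℕ := 76734755995258136911207935551663282938830707315570797581386256713238925852091640405774062132349973788951478714600747659475258234737141282870456870042495877625265181541279820526316091284056026009248914150301958694360059692975261427108993220569337803452426602671715844173461263038348564977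
def pk62 : ℕ := 76734755995275583309869152660434553628946668170039224251468724615784071558085651519121122430781037245884559501767459926153909608123066109684350668051955197556648433566593331837332428194208158785920264787147502159268923269954128035329155065830155736357761720136290600839568115074984729209
def pk63 : ℕ := 76734755995275583309869152660434553628946668170039429345416586277267312525719890570595394219543387867915786741979595812468182411543874475685204181045748580771293065674440139062792773058043316348173356841859321941693565492876201881114670917346167371285270574698530365919404322595825510351
def pk64 : ℕ := 76734755995258136911207935551663282938830707315571002675334118374722166819725879457248333921112324410982705954812883545789531066497564102680276592914849345496483569802181676654115953596599429907768679773321522863276361532916811538865647903113628470758370690885128810902675402884019764695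
def pk65 : ℕ := 76734755995275583309869152660434553628946668170039429345416586277267312525719890570595394219543387867915786741979595812468182439883488929494170390924308665427866821827495187965132290506751562684440030410167066328185225109895678147085809748374446403663705808349703567568782254920655928927
def pk70 : ℕ := 76734755995275583309869152660434553628946668170039224251468724569151106821627678679867254746359576893770994297156878116183578983191369466272669494858819367654296701704903146954851647183241274254961392492985113263571885752709626557076927330816402916815429688253907790031932501382015864317
def pk71 : ℕ := 76135302301812202748961510369416982812921841416216780281248756840081447998312028882752139157904376994175627539961401073249965191119044289483673821134528816077643387025481174420734227019878720727702344099968660310053731718059245756192661899700527155560322862312757903634155653180918587388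
def pk72 : ℕ := 76734755995275583309869152660434553628946668170039224251468724615784071558096172433030652472274707121278967571614390514957685571582706000469171806801186516714960533009915827847338420054597561950720947507757800606606210455185551210118582632883113429965467697316745382522530393921601559417
def pk73 : ℕ := 76734755995275583309869152660434553628946668170039429345416586230634347789240793708882548248685418469111886584629473672117806227447462586692531217324658603028032869396290368474168667024047332748053945396507588997237441069339602603623044740880359931260302910202443109828582989748212722911
def pk74 : ℕ := 76135302301812202748961510369416982812921841416216985375196618501564688965925143911767432660230218569516519827433996629184192435375137409903535543600368051451379554716868395940051246860684779220794897003491136043719287034689221802738779309764484170005196084261293223430806141547115445982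
def pk75 : ℕ := 76734755995275583309869152660434553628946668170039429345416586277267312525709287462045945974600548696619859859086986070891912815838799120889033529267025752088696700701303049366655439895403620443813500411280276340271765771815527256664700042947070444410340919265280702319180882287798418011
def pk80 : ℕ := 76734755995275582244960491473581788358712197796392234246005774560807192922393946846416508165992674288127391562414694876387272805810844397918592957383876682869103363837327508899894627301318712335999711838925790317103699868332682330256122224749292406660237839775239833731513280569905479412
def pk81 : ℕ := 76734719405309910267647526295727965079543693560335817843235615405951458455684184209834107704699361312914812997837913284998317636195457422145320631697865873454319157468021541653779486786444696102854173689673864031587136010911493901759907364834094268929112523846553407989335679512291540551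
def pk82 : ℕ := 76734755995275582244960495440675677733028259587876169195941978616711609901152495530145271469405949730004521141782666890432966803029534660920750008348932756108161827919593115470209728827352559330279280414634777930825825402048746810301717923879192942025241689735188214646042426196613429495
def pk83 : ℕ := 76734755995275583309869148693340649476054171723633986947778473033631853812260206854345898273677528679354113057416271311630476304294415976288283609578489689096698907121968653059248400544918288151786365050230454440680861419603832915949295312769884848653246838778029057075634332571218718648
def pk84 : ℕ := 76734719405309911332556183515486826196885667487577570545008313878776119345550444217763497812384215704141534492839489720241521134679029000515011283892478879681914700752662685813133260030044271918640826900978528155164297562182644487453080452854686710922121522849342631333456731513604779787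
def pk85 : ℕ := 76734755995275583309869152660434538850370233515117921897714677089536270791018755538074661577090804121231242636784243325676170301513106239290440660543545762335757371204234259629563502070952135146065933625939442054402986953319897395994891011899785384018250688737977437990163478197926668731
def pk90 : ℕ := 76734755995275583309869152660434553628946668170039224251468724615784071558085651519081622773221109392064604494513291671418331696077251346371188810997994609141650925757164186039231096671503991867405605723090960496879269770746730887791387701683251666806955683359566927155018160316377384956
def pk91 : ℕ := 76730108781577349230344647736280097733500096815879218178368557097359987420512680939146423981456474123791542370228944408674328826111402216224902693160472036597223102724589118626954456390468726225250340721478026710743102754586520949832966570781246227848552006733291983094070858227056435189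
def pk92 : ℕ := 76734755995275583309869152660434553628946668170039224251468724615784071558085651519121122430781046157445276099761990475144425784483740924877595798359993433170235423078059732060723294990726491853519172528402742825660693984053307925240093448853268685220171539230829874230881503269361703545
def pk93 : ℕ := 76734755995275583309869152660434553628946668170039429345416586277267312525719890570555894561983442121352830440314535155971960922672057303081637585311547495807875407972596333466199072728082525382716594806496916938063238854759664045796577960350920969892264937904208888518498412128441722846
def pk94 : ℕ := 76730108781577349230344647736280097733500096815879423272316418758843228388146919990620695770218806853079768316030187893227958052706208172935351467474024923263447584940021266053922432447047259740561329804883983151927071838599454107838156829448915530933861261277933944457551110039120773079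
def pk95 : ℕ := 76734755995275583309869152660434553628946668170039429345416586277267312525719890570595394219543378886733502045563233959698055011078546881588044572673546319836459905293491879487691271047305025368830161611808699266844663068066241083245283707520937988305480793775471835594361755081426041435
def codes5 : List ℕ :=
  [0, 1, 3, 4, 6, 7, 11, 15, 20, 22, 30, 31, 32, 33, 41, 43, 48, 52, 56, 57, 59, 60, 62, 63, 75, 79, 95, 107, 123, 127, 148, 150, 158, 180, 188, 190, 222, 223, 254, 255, 288, 289, 297, 304, 312, 313, 361, 363, 377, 379, 432, 436, 440, 444, 504, 505, 507, 508, 510, 511, 512, 513, 515, 516, 518, 519, 579, 583, 587, 591, 644, 646, 660, 662, 710, 711, 719, 726, 734, 735, 768, 769, 800, 801, 833, 835, 843, 865, 873, 875, 896, 900, 916, 928, 944, 948, 960, 961, 963, 964, 966, 967, 971, 975, 980, 982, 990, 991, 992, 993, 1001, 1003, 1008, 1012, 1016, 1017, 1019, 1020, 1022, 1023]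
def tab5 : List (List (ℕ × ℕ)) :=
  [[(pk00, mk00), (pk01, mk01), (pk02, mk02), (pk03, mk03), (pk04, mk04), (pk05, mk05)],
   [(pk10, mk10), (pk11, mk11), (pk12, mk12), (pk13, mk13), (pk14, mk14), (pk15, mk15)],
   [(pk20, mk20), (pk21, mk21), (pk22, mk22), (pk23, mk23), (pk24, mk24), (pk25, mk25)],
   [(pk30, mk30), (pk31, mk31), (pk32, mk32), (pk33, mk33), (pk34, mk34), (pk35, mk35)],
   [(pk40, mk40), (pk41, mk41), (pk42, mk42), (pk43, mk43), (pk44, mk44), (pk45, mk45)],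
   [(pk50, mk50), (pk51, mk51), (pk52, mk52), (pk53, mk53), (pk54, mk54), (pk55, mk55)],
   [(pk60, mk60), (pk61, mk61), (pk62, mk62), (pk63, mk63), (pk64, mk64), (pk65, mk65)],
   [(pk70, mk70), (pk71, mk71), (pk72, mk72), (pk73, mk73), (pk74, mk74), (pk75, mk75)],
   [(pk80, mk80), (pk81, mk81), (pk82, mk82), (pk83, mk83), (pk84, mk84), (pk85, mk85)],
   [(pk90, mk90), (pk91, mk91), (pk92, mk92), (pk93, mk93), (pk94, mk94), (pk95, mk95)]]
def cols7 : List (List ℕ) :=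
  [[mk00, mk10, mk20, mk30, mk40, mk50, mk60, mk70, mk80, mk90],
   [mk01, mk11, mk21, mk31, mk41, mk51, mk61, mk71, mk81, mk91],
   [mk02, mk12, mk22, mk32, mk42, mk52, mk62, mk72, mk82, mk92],
   [mk03, mk13, mk23, mk33, mk43, mk53, mk63, mk73, mk83, mk93],
   [mk04, mk14, mk24, mk34, mk44, mk54, mk64, mk74, mk84, mk94],
   [mk05, mk15, mk25, mk35, mk45, mk55, mk65, mk75, mk85, mk95]]
def trip5 : List (ℕ × ℕ × ℕ) :=
  [(1, 3, 4), (0, 1, 3), (2, 3, 4), (0, 1, 2), (0, 2, 3), (1, 2, 4), (0, 3, 4), (0, 1, 4), (1, 2, 3), (0, 2, 4)]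
def trip7 : List (ℕ × ℕ × ℕ) :=
  [(1, 3, 4), (2, 3, 4), (1, 2, 4), (1, 2, 3), (2, 4, 6), (2, 3, 6), (2, 3, 5), (0, 2, 4), (0, 2, 3), (2, 4, 5), (1, 2, 5), (0, 2, 6), (1, 3, 6), (1, 4, 5), (2, 5, 6), (1, 5, 6), (0, 1, 2), (0, 1, 5), (1, 3, 5), (1, 4, 6), (0, 1, 4), (3, 4, 6), (0, 5, 6), (0, 3, 4), (0, 3, 5), (0, 4, 6), (0, 2, 5), (0, 4, 5), (0, 1, 6), (3, 4, 5), (0, 1, 3), (1, 2, 6), (4, 5, 6), (0, 3, 6), (3, 5, 6)]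
def subs7 : List (List ℕ) :=
  [[0, 1, 2, 3, 4], [0, 1, 2, 3, 5], [0, 1, 2, 3, 6], [0, 1, 2, 4, 5], [0, 1, 2, 4, 6], [0, 1, 2, 5, 6], [0, 1, 3, 4, 5], [0, 1, 3, 4, 6], [0, 1, 3, 5, 6], [0, 1, 4, 5, 6], [0, 2, 3, 4, 5], [0, 2, 3, 4, 6], [0, 2, 3, 5, 6], [0, 2, 4, 5, 6], [0, 3, 4, 5, 6], [1, 2, 3, 4, 5], [1, 2, 3, 4, 6], [1, 2, 3, 5, 6], [1, 2, 4, 5, 6], [1, 3, 4, 5, 6], [2, 3, 4, 5, 6]]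
def rows7 : List (List ℕ) :=
  [[1, 0, 0, 0, 0, 0, 9, 9, 0, 0, 0, 0, 0, 0, 0, 5, 5, 0, 0, 4, 0],
   [3, 0, 0, 0, 0, 0, 0, 0, 0, 0, 9, 9, 0, 0, 0, 9, 9, 0, 0, 0, 4],
   [6, 0, 0, 9, 9, 0, 0, 0, 0, 0, 0, 0, 0, 0, 0, 2, 2, 0, 4, 0, 0],
   [9, 9, 9, 0, 0, 0, 0, 0, 0, 0, 0, 0, 0, 0, 0, 4, 4, 4, 0, 0, 0],
   [0, 0, 0, 0, 3, 0, 0, 0, 0, 0, 0, 1, 0, 6, 0, 0, 1, 0, 6, 0, 10],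
   [0, 0, 3, 0, 0, 0, 0, 0, 0, 0, 0, 6, 6, 0, 0, 0, 6, 6, 0, 0, 8],
   [0, 3, 0, 0, 0, 0, 0, 0, 0, 0, 6, 0, 9, 0, 0, 6, 0, 9, 0, 0, 2],
   [10, 0, 0, 5, 5, 0, 0, 0, 0, 0, 2, 2, 0, 4, 0, 0, 0, 0, 0, 0, 0],
   [5, 5, 5, 0, 0, 0, 0, 0, 0, 0, 4, 4, 4, 0, 0, 0, 0, 0, 0, 0, 0],
   [0, 0, 0, 3, 0, 0, 0, 0, 0, 0, 1, 0, 0, 9, 0, 1, 0, 0, 9, 0, 5],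
   [0, 6, 0, 6, 0, 9, 0, 0, 0, 0, 0, 0, 0, 0, 0, 8, 0, 2, 2, 0, 0],
   [0, 0, 10, 0, 10, 10, 0, 0, 0, 0, 0, 8, 8, 8, 0, 0, 0, 0, 0, 0, 0],
   [0, 0, 1, 0, 0, 0, 0, 6, 6, 0, 0, 0, 0, 0, 0, 0, 10, 10, 0, 8, 0],
   [0, 0, 0, 1, 0, 0, 1, 0, 0, 9, 0, 0, 0, 0, 0, 7, 0, 0, 5, 5, 0],
   [0, 0, 0, 0, 0, 3, 0, 0, 0, 0, 0, 0, 1, 1, 0, 0, 0, 1, 1, 0, 7],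
   [0, 0, 0, 0, 0, 1, 0, 0, 1, 1, 0, 0, 0, 0, 0, 0, 0, 7, 7, 7, 0],
   [4, 4, 4, 4, 4, 4, 0, 0, 0, 0, 0, 0, 0, 0, 0, 0, 0, 0, 0, 0, 0],
   [0, 8, 0, 8, 0, 2, 8, 0, 2, 2, 0, 0, 0, 0, 0, 0, 0, 0, 0, 0, 0],
   [0, 1, 0, 0, 0, 0, 6, 0, 9, 0, 0, 0, 0, 0, 0, 10, 0, 5, 0, 2, 0],
   [0, 0, 0, 0, 1, 0, 0, 1, 0, 6, 0, 0, 0, 0, 0, 0, 7, 0, 10, 10, 0],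
   [8, 0, 0, 2, 2, 0, 2, 2, 0, 4, 0, 0, 0, 0, 0, 0, 0, 0, 0, 0, 0],
   [0, 0, 0, 0, 0, 0, 0, 3, 0, 0, 0, 3, 0, 0, 6, 0, 3, 0, 0, 6, 6],
   [0, 0, 0, 0, 0, 7, 0, 0, 7, 7, 0, 0, 7, 7, 7, 0, 0, 0, 0, 0, 0],
   [7, 0, 0, 0, 0, 0, 5, 5, 0, 0, 5, 5, 0, 0, 4, 0, 0, 0, 0, 0, 0],
   [0, 7, 0, 0, 0, 0, 10, 0, 5, 0, 10, 0, 5, 0, 2, 0, 0, 0, 0, 0, 0],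
   [0, 0, 0, 0, 7, 0, 0, 7, 0, 10, 0, 7, 0, 10, 10, 0, 0, 0, 0, 0, 0],
   [0, 10, 0, 10, 0, 5, 0, 0, 0, 0, 8, 0, 2, 2, 0, 0, 0, 0, 0, 0, 0],
   [0, 0, 0, 7, 0, 0, 7, 0, 0, 5, 7, 0, 0, 5, 5, 0, 0, 0, 0, 0, 0],
   [0, 0, 8, 0, 8, 8, 0, 8, 8, 8, 0, 0, 0, 0, 0, 0, 0, 0, 0, 0, 0],
   [0, 0, 0, 0, 0, 0, 3, 0, 0, 0, 3, 0, 0, 0, 9, 3, 0, 0, 0, 9, 9],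
   [2, 2, 2, 0, 0, 0, 4, 4, 4, 0, 0, 0, 0, 0, 0, 0, 0, 0, 0, 0, 0],
   [0, 0, 6, 0, 6, 6, 0, 0, 0, 0, 0, 0, 0, 0, 0, 0, 8, 8, 8, 0, 0],
   [0, 0, 0, 0, 0, 0, 0, 0, 0, 3, 0, 0, 0, 3, 3, 0, 0, 0, 3, 3, 3],
   [0, 0, 7, 0, 0, 0, 0, 10, 10, 0, 0, 10, 10, 0, 8, 0, 0, 0, 0, 0, 0],
   [0, 0, 0, 0, 0, 0, 0, 0, 3, 0, 0, 0, 3, 0, 1, 0, 0, 3, 0, 1, 1]]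
def full5 : ℕ := Nat.add (Nat.mul (Nat.div (Nat.sub (Nat.pow 2 840) 1) 127) (Nat.pow 2 120)) (Nat.sub (Nat.pow 2 120) 1)
def full7 : ℕ := Nat.sub (Nat.pow 2 248) 1

noncomputable def allB {β : Type} (f : β → Bool) (l : List β) : Bool :=
  List.rec (motive := fun _ => Bool) true
    (fun a _ ih => Bool.rec (motive := fun _ => Bool) false ih (f a)) l

/-- force a number, then test whether it has few bits, otherwise continue. -/
noncomputable def contB (m : ℕ) (k : ℕ → Bool) : Bool :=
  Nat.rec (motive := fun _ => Bool) true
    (fun n _ => Bool.rec (motive := fun _ => Bool) (k (Nat.succ n)) true (Nat.ble (Nat.mod (Nat.shiftRight (Nat.succ n) 120) 127) 18)) m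

noncomputable def srch5 (rows : List (List (ℕ × ℕ))) : ℕ → ℕ → Bool :=
  List.rec (motive := fun _ => ℕ → ℕ → Bool)
    (fun _ n => Nat.rec (motive := fun _ => Bool) false (fun _ _ => true) n)
    (fun row _ ih m n => allB (fun q : ℕ × ℕ =>
      contB (Nat.land m q.1) (fun m' => ih m' (Nat.land n q.2))) row) rows

noncomputable def step7 (col : List ℕ) (st : List ℕ) : List ℕ → Option (List ℕ) :=
  List.rec (motive := fun _ => List ℕ → Option (List ℕ))
    (fun _ => some [])
    (fun s _ ih ps => List.rec (motive := fun _ => Option (List ℕ)) none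
      (fun p ps' _ =>
        Nat.rec (motive := fun _ => Option (List ℕ))
          (Option.rec (motive := fun _ => Option (List ℕ)) none (fun l => some (s :: l)) (ih ps'))
          (fun p' _ => Nat.rec (motive := fun _ => Option (List ℕ)) none
            (fun n _ => Option.rec (motive := fun _ => Option (List ℕ)) none
              (fun l => some (Nat.succ n :: l)) (ih ps')) (Nat.land s (col.getD p' 0))) p) ps) st

noncomputable def srch7 (rows : List (List ℕ)) : List ℕ → Bool :=
  List.rec (motive := fun _ => List ℕ → Bool) (fun _ => false)
    (fun ps _ ih st => allB (fun col =>
      Option.rec (motive := fun _ => Bool) true ih (step7 col st ps)) cols7) rows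

theorem srch5_ok : srch5 tab5 full5 full7 = true := by decide +kernel

theorem srch7_ok : srch7 rows7 (List.replicate 21 full7) = true := by decide +kernel

theorem allB_spec {β : Type} (f : β → Bool) (l : List β) (h : allB f l = true) :
    ∀ a ∈ l, f a = true := by
  induction l with
  | nil => simp
  | cons a l ih =>
    have h' : Bool.rec (motive := fun _ => Bool) false (allB f l) (f a) = true := h
    cases hfa : f a with
    | false => rw [hfa] at h'; simp at h'
    | true =>
      rw [hfa] at h'
      intro b hb
      rcases List.mem_cons.1 hb with rfl | hb
      · exact hfa
      · exact ih h' b hb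

theorem bits_card (m : ℕ) (C : Finset ℕ) (hC : ∀ c ∈ C, m.testBit c = true)
    (hm : ∀ b, m.testBit b = true → 7 ∣ b ∧ b < 840) : C.card ≤ m % 127 := by
  set S : Finset ℕ := m.bitIndices.toFinset with hS
  have hsum : ∑ i ∈ S, 2 ^ i = m := Finset.sum_toFinset_bitIndices_two_pow m
  have hmem : ∀ b, b ∈ S ↔ m.testBit b = true := by
    intro b
    rw [hS, List.mem_toFinset, Nat.mem_bitIndices]
  have hsub : S ⊆ (Finset.range 120).image (fun i => 7 * i) := by
    intro b hb
    obtain ⟨⟨k, rfl⟩, h2⟩ := hm b ((hmem b).1 hb)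
    exact Finset.mem_image.2 ⟨k, Finset.mem_range.2 (by omega), rfl⟩
  have hcard : S.card ≤ 120 := by
    refine (Finset.card_le_card hsub).trans (Finset.card_image_le.trans ?_)
    simp
  have hmod : m ≡ S.card [MOD 127] := by
    rw [← hsum, Finset.card_eq_sum_ones]
    refine Nat.ModEq.sum ?_
    intro b hb
    obtain ⟨⟨k, rfl⟩, h2⟩ := hm b ((hmem b).1 hb)
    rw [pow_mul]
    have : (2 ^ 7) ≡ 1 [MOD 127] := by decide
    simpa using this.pow k
  have h1 : m % 127 = S.card := by
    have : m % 127 = S.card % 127 := hmod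
    rw [this, Nat.mod_eq_of_lt (by omega)]
  rw [h1]
  exact Finset.card_le_card (fun c hc => (hmem c).2 (hC c hc))

theorem contB_spec (m : ℕ) (k : ℕ → Bool) (h : contB m k = true)
    (hm : 18 < (m >>> 120) % 127) : k m = true := by
  cases m with
  | zero => simp at hm
  | succ n =>
    have h' : Bool.rec (motive := fun _ => Bool) (k (n + 1)) true
      (Nat.ble (((n + 1) >>> 120) % 127) 18) = true := h
    have : Nat.ble (((n + 1) >>> 120) % 127) 18 = false := by
      rw [Bool.eq_false_iff]
      intro hc
      have := Nat.le_of_ble_eq_true hc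
      omega
    rw [this] at h'
    exact h'

theorem srch5_sound (C : Finset ℕ) (hcard : 19 ≤ C.card) :
    ∀ (sel : List (ℕ × ℕ)) (rows : List (List (ℕ × ℕ))),
      List.Forall₂ (fun q row => q ∈ row ∧ ∀ c ∈ C, q.1.testBit (120 + c) = true) sel rows →
      ∀ m n, srch5 rows m n = true → (∀ c ∈ C, m.testBit (120 + c) = true) →
        (∀ b, m.testBit (120 + b) = true → 7 ∣ b ∧ b < 840) →
        ∃ i, n.testBit i = true ∧ ∀ q ∈ sel, q.2.testBit i = true := by
  intro sel rows hF
  induction hF with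
  | nil =>
    intro m n h _ _
    cases n with
    | zero => exact absurd h (by simp [srch5])
    | succ n =>
      obtain ⟨i, hi⟩ := Nat.exists_testBit_of_ne_zero (Nat.succ_ne_zero n)
      exact ⟨i, hi, by simp⟩
  | @cons q row sel rows hq hF ih =>
    intro m n h hm hb
    have h' : allB (fun q : ℕ × ℕ =>
      contB (m &&& q.1) (fun m' => srch5 rows m' (n &&& q.2))) row = true := h
    have h2 := allB_spec _ _ h' q hq.1
    have hm2 : ∀ c ∈ C, (m &&& q.1).testBit (120 + c) = true := by
      intro c hc
      rw [Nat.testBit_and, hm c hc, hq.2 c hc]; rfl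
    have hb2 : ∀ b, (m &&& q.1).testBit (120 + b) = true → 7 ∣ b ∧ b < 840 := by
      intro b hbb
      rw [Nat.testBit_and, Bool.and_eq_true] at hbb
      exact hb b hbb.1
    have h3 := contB_spec _ _ h2 (by
      have := bits_card ((m &&& q.1) >>> 120) C
        (fun c hc => by rw [Nat.testBit_shiftRight]; exact hm2 c hc)
        (fun b hbb => by rw [Nat.testBit_shiftRight] at hbb; exact hb2 b hbb)
      omega)
    obtain ⟨i, hi, hs⟩ := ih _ _ h3 hm2 hb2
    rw [Nat.testBit_and, Bool.and_eq_true] at hi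
    refine ⟨i, hi.1, ?_⟩
    intro q' hq'
    rcases List.mem_cons.1 hq' with rfl | hq'
    · exact hi.2
    · exact hs q' hq'

/-- Compatibility of a row of positions with a column of masks and chosen bits. -/
def Compat (col : List ℕ) (ps is : List ℕ) : Prop :=
  List.Forall₂ (fun p i => ∀ p', p = p' + 1 → (col.getD p' 0).testBit i = true) ps is

theorem step7_sound (col : List ℕ) : ∀ (st is : List ℕ),
    List.Forall₂ (fun s i => s.testBit i = true) st is → ∀ ps, Compat col ps is →
    ∃ st', step7 col st ps = some st' ∧ List.Forall₂ (fun s i => s.testBit i = true) st' is := by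
  intro st is hF
  induction hF with
  | nil => intro ps _; exact ⟨[], rfl, List.Forall₂.nil⟩
  | @cons s i st is hs hF ih =>
    intro ps hc
    cases hc with
    | @cons p _ ps' _ hp hc =>
      obtain ⟨st', h1, h2⟩ := ih ps' hc
      cases p with
      | zero =>
        refine ⟨s :: st', ?_, List.Forall₂.cons hs h2⟩
        change Option.rec (motive := fun _ => Option (List ℕ)) none (fun l => some (s :: l))
          (step7 col st ps') = _
        rw [h1]
      | succ p' =>
        have hb : (s &&& col.getD p' 0).testBit i = true := by
          rw [Nat.testBit_and, hs, hp p' rfl]; rfl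
        refine ⟨(s &&& col.getD p' 0) :: st', ?_, List.Forall₂.cons hb h2⟩
        change Nat.rec (motive := fun _ => Option (List ℕ)) none
            (fun n _ => Option.rec (motive := fun _ => Option (List ℕ)) none
              (fun l => some (Nat.succ n :: l)) (step7 col st ps')) (s &&& col.getD p' 0) = _
        rw [h1]
        cases hx : s &&& col.getD p' 0 with
        | zero => rw [hx] at hb; simp at hb
        | succ n => rfl

theorem srch7_sound (is : List ℕ) : ∀ (rows : List (List ℕ)),
    (∀ ps ∈ rows, ∃ col ∈ cols7, Compat col ps is) → ∀ st,
    List.Forall₂ (fun s i => s.testBit i = true) st is → srch7 rows st = true → False := by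
  intro rows
  induction rows with
  | nil => intro _ st _ h; exact absurd h (by simp [srch7])
  | cons ps rows ih =>
    intro hr st hst h
    have h' : allB (fun col =>
      Option.rec (motive := fun _ => Bool) true (srch7 rows) (step7 col st ps)) cols7 = true := h
    obtain ⟨col, hcol, hc⟩ := hr ps (by simp)
    have h2 := allB_spec _ _ h' col hcol
    obtain ⟨st', h3, h4⟩ := step7_sound col st is hst ps hc
    rw [h3] at h2
    exact ih (fun ps' h => hr ps' (by simp [h])) st' h4 h2

def acy (x y z : Bool) : Bool := !(x == z && y != x)

/-- law `l` on a triple, in terms of the three comparisons. -/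
def okPat (l : ℕ) (x y z : Bool) : Bool :=
  acy x y z && (bif Nat.blt l 3 then !(!x && !y && z) else !(x && !y && !z)) &&
  (bif Nat.beq (l % 3) 0 then !(x && y && !z) else
    bif Nat.beq (l % 3) 1 then !(!x && y && z) else !(!x && !y && !z))

def pq (i j : ℕ) : ℕ := j * (j - 1) / 2 + i

def okAt (c p l : ℕ) : Bool :=
  okPat l (c.testBit (pq (trip5.getD p (0, 0, 0)).1 (trip5.getD p (0, 0, 0)).2.1))
    (c.testBit (pq (trip5.getD p (0, 0, 0)).1 (trip5.getD p (0, 0, 0)).2.2))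
    (c.testBit (pq (trip5.getD p (0, 0, 0)).2.1 (trip5.getD p (0, 0, 0)).2.2))

def acyAt (c p : ℕ) : Bool :=
  acy (c.testBit (pq (trip5.getD p (0, 0, 0)).1 (trip5.getD p (0, 0, 0)).2.1))
    (c.testBit (pq (trip5.getD p (0, 0, 0)).1 (trip5.getD p (0, 0, 0)).2.2))
    (c.testBit (pq (trip5.getD p (0, 0, 0)).2.1 (trip5.getD p (0, 0, 0)).2.2))

def ent (p l : ℕ) : ℕ × ℕ := (tab5.getD p []).getD l (0, 0)

theorem chk_codes : ((List.range 1024).all fun c =>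
    !((List.range 10).all fun p => acyAt c p) || codes5.contains c) = true := by decide +kernel

theorem chk_bits : (codes5.all fun c => (List.range 10).all fun p => (List.range 6).all fun l =>
    !(okAt c p l) || (ent p l).1.testBit (120 + 7 * codes5.idxOf c)) = true := by decide +kernel

theorem chk_full1 : ((List.range 840).all fun b =>
    !(full5.testBit (120 + b)) || Nat.beq (b % 7) 0) = true := by decide +kernel

theorem chk_full2 : ((List.range 120).all fun b => full5.testBit (120 + 7 * b)) = true := by
  decide +kernel

theorem chk_full3 : full5 < 2 ^ 960 := by decide +kernel

theorem chk_len : codes5.length = 120 := by decide +kernel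

theorem full5_bits (b : ℕ) (h : full5.testBit (120 + b) = true) : 7 ∣ b ∧ b < 840 := by
  have hb : b < 840 := by
    by_contra hb
    have h2 : full5 < 2 ^ (120 + b) :=
      lt_of_lt_of_le chk_full3 (Nat.pow_le_pow_right (by norm_num) (by omega))
    rw [Nat.testBit_lt_two_pow h2] at h
    exact absurd h (by simp)
  have h1 := List.all_eq_true.1 chk_full1 b (List.mem_range.2 hb)
  rw [h] at h1
  have h3 : b % 7 = 0 := Nat.eq_of_beq_eq_true (by simpa using h1)
  exact ⟨Nat.dvd_of_mod_eq_zero h3, hb⟩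

theorem okAt_acyAt {c p l : ℕ} (h : okAt c p l = true) : acyAt c p = true := by
  unfold okAt okPat at h
  rw [Bool.and_eq_true, Bool.and_eq_true] at h
  exact h.1.1

theorem five_level (f : ℕ → ℕ) (hf : ∀ p < 10, f p < 6) (C : Finset ℕ) (hcard : 19 ≤ C.card)
    (hC : ∀ c ∈ C, c < 1024 ∧ ∀ p < 10, okAt c p (f p) = true) :
    ∃ i, i < 248 ∧ ∀ p < 10, (ent p (f p)).2.testBit i = true := by
  have hmem : ∀ c ∈ C, c ∈ codes5 := by
    intro c hc
    have h1 := List.all_eq_true.1 chk_codes c (List.mem_range.2 (hC c hc).1)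
    have h2 : ((List.range 10).all fun p => acyAt c p) = true :=
      List.all_eq_true.2 fun p hp => okAt_acyAt ((hC c hc).2 p (List.mem_range.1 hp))
    rw [h2] at h1
    simpa using h1
  have hidx : ∀ c ∈ C, codes5.idxOf c < 120 := by
    intro c hc
    have := List.idxOf_lt_length_iff.2 (hmem c hc)
    rwa [chk_len] at this
  set C' : Finset ℕ := C.image (fun c => 7 * codes5.idxOf c) with hC'
  have hcard' : 19 ≤ C'.card := by
    rw [hC', Finset.card_image_of_injOn]
    · exact hcard
    · intro a ha b hb hab
      have hab' : codes5.idxOf a = codes5.idxOf b := by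
        have : 7 * codes5.idxOf a = 7 * codes5.idxOf b := hab
        omega
      exact (List.idxOf_inj (hmem a ha)).1 hab'
  have hrows : tab5 = (List.range 10).map (fun p => tab5.getD p []) := rfl
  have hlen : ∀ p < 10, (tab5.getD p []).length = 6 := by decide
  have hF : List.Forall₂ (fun q row => q ∈ row ∧ ∀ c ∈ C', q.1.testBit (120 + c) = true)
      ((List.range 10).map (fun p => ent p (f p))) tab5 := by
    rw [hrows, List.forall₂_map_left_iff, List.forall₂_map_right_iff, List.forall₂_same]
    intro p hp
    have hp := List.mem_range.1 hp
    constructor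
    · unfold ent
      have hlt : f p < (tab5.getD p []).length := by rw [hlen p hp]; exact hf p hp
      rw [List.getD_eq_getElem (tab5.getD p []) _ hlt]
      exact List.getElem_mem _
    · intro c' hc'
      obtain ⟨c, hc, rfl⟩ := Finset.mem_image.1 hc'
      have h1 := List.all_eq_true.1 (List.all_eq_true.1 (List.all_eq_true.1 chk_bits c (hmem c hc))
        p (List.mem_range.2 hp)) (f p) (List.mem_range.2 (hf p hp))
      rw [(hC c hc).2 p hp] at h1
      simpa using h1
  obtain ⟨i, hi, hs⟩ := srch5_sound C' hcard' _ _ hF _ _ srch5_ok (by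
    intro c' hc'
    obtain ⟨c, hc, rfl⟩ := Finset.mem_image.1 hc'
    exact List.all_eq_true.1 chk_full2 _ (List.mem_range.2 (hidx c hc))) full5_bits
  refine ⟨i, ?_, ?_⟩
  · by_contra hlt
    have h2 : full7 < 2 ^ i :=
      lt_of_lt_of_le (show full7 < 2 ^ 248 by decide +kernel)
        (Nat.pow_le_pow_right (by norm_num) (by omega))
    rw [Nat.testBit_lt_two_pow h2] at hi
    exact absurd hi (by simp)
  · intro p hp
    exact hs _ (List.mem_map.2 ⟨p, List.mem_range.2 hp, rfl⟩)

def subEl (s i : ℕ) : ℕ := (subs7.getD s []).getD i 0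
def rowEnt (n s : ℕ) : ℕ := (rows7.getD n []).getD s 0

theorem chk_rows : ∀ n < 35, ∀ s < 21, ∀ p < 10, rowEnt n s = p + 1 →
    subEl s (trip5.getD p (0, 0, 0)).1 = (trip7.getD n (0, 0, 0)).1 ∧
    subEl s (trip5.getD p (0, 0, 0)).2.1 = (trip7.getD n (0, 0, 0)).2.1 ∧
    subEl s (trip5.getD p (0, 0, 0)).2.2 = (trip7.getD n (0, 0, 0)).2.2 := by decide +kernel

theorem chk_rows2 : ∀ n < 35, ∀ s < 21, rowEnt n s < 11 := by decide +kernel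

theorem chk_cols : ∀ l < 6, ∀ p < 10, (cols7.getD l []).getD p 0 = (ent p l).2 := by
  decide +kernel

theorem chk_sub : ∀ s < 21, ∀ j < 5, subEl s j < 7 ∧ ∀ i < j, subEl s i < subEl s j := by
  decide +kernel

theorem chk_trip : ∀ p < 10, (trip5.getD p (0, 0, 0)).1 < (trip5.getD p (0, 0, 0)).2.1 ∧
    (trip5.getD p (0, 0, 0)).2.1 < (trip5.getD p (0, 0, 0)).2.2 ∧
    (trip5.getD p (0, 0, 0)).2.2 < 5 := by decide +kernel

theorem full7_bits : ∀ i < 248, full7.testBit i = true := by decide +kernel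

theorem seven_level (lw : ℕ → ℕ → ℕ → ℕ) (hlw : ∀ i j k, lw i j k < 6)
    (h : ∀ s < 21, ∃ i, i < 248 ∧ ∀ p < 10,
      (ent p (lw (subEl s (trip5.getD p (0, 0, 0)).1) (subEl s (trip5.getD p (0, 0, 0)).2.1)
        (subEl s (trip5.getD p (0, 0, 0)).2.2))).2.testBit i = true) : False := by
  choose! ix hix using h
  have hst : List.Forall₂ (fun s i => Nat.testBit s i = true) (List.replicate 21 full7)
      ((List.range 21).map ix) := by
    have : List.replicate 21 full7 = (List.range 21).map (fun _ => full7) := rfl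
    rw [this, List.forall₂_map_left_iff, List.forall₂_map_right_iff, List.forall₂_same]
    intro s hs
    exact full7_bits _ (hix s (List.mem_range.1 hs)).1
  refine srch7_sound ((List.range 21).map ix) rows7 ?_ _ hst srch7_ok
  have hrows : rows7 = (List.range 35).map (fun n => (List.range 21).map (fun s => rowEnt n s)) := by
    decide +kernel
  intro ps hps
  rw [hrows] at hps
  obtain ⟨n, hn, rfl⟩ := List.mem_map.1 hps
  have hn := List.mem_range.1 hn
  set l := lw (trip7.getD n (0, 0, 0)).1 (trip7.getD n (0, 0, 0)).2.1 (trip7.getD n (0, 0, 0)).2.2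
    with hl
  have hl6 : l < 6 := hlw _ _ _
  refine ⟨cols7.getD l [], ?_, ?_⟩
  · rw [List.getD_eq_getElem _ _ (show l < cols7.length from hl6)]
    exact List.getElem_mem _
  · unfold Compat
    rw [List.forall₂_map_left_iff, List.forall₂_map_right_iff, List.forall₂_same]
    intro s hs p hp
    have hs := List.mem_range.1 hs
    have hp10 : p < 10 := by
      have := chk_rows2 n hn s hs
      omega
    obtain ⟨h1, h2, h3⟩ := chk_rows n hn s hs p hp10 hp
    have h4 := (hix s hs).2 p hp10
    rw [h1, h2, h3] at h4
    rw [chk_cols l hl6 p hp10]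
    exact h4

/-! ### Condorcet domains -/

open Classical in
theorem majCount_three {α : Type*} (p q s : α → α → Prop) (a b : α) :
    majCount [p, q, s] a b =
      (if p a b then 1 else 0) + (if q a b then 1 else 0) + (if s a b then 1 else 0) := by
  unfold majCount
  rw [Nat.card_eq_fintype_card, Fintype.card_subtype, Finset.card_filter]
  refine (Fin.sum_univ_three _).trans ?_
  simp [List.get]

theorem no_cycle {α : Type*} {X : Set α} {D : Set (α → α → Prop)} (hD : IsCondorcetDomain X D)
    {a b c : α} (ha : a ∈ X) (hb : b ∈ X) (hc : c ∈ X) {p q s : α → α → Prop}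
    (hp : p ∈ D) (hq : q ∈ D) (hs : s ∈ D) (h1 : p a b) (h2 : p b c) (h3 : q a b) (h4 : ¬ q a c)
    (h5 : s b c) (h6 : ¬ s a c) : False := by
  classical
  have h := hD.2 [p, q, s] (by simp [hp, hq, hs]) ⟨1, rfl⟩ a ha b hb c hc
  unfold MajPrefers at h
  rw [majCount_three, majCount_three, majCount_three] at h
  simp only [h1, h2, h3, h4, h5, h6, if_true, if_false, List.length_cons, List.length_nil] at h
  have := h (by split_ifs <;> omega) (by split_ifs <;> omega)
  split_ifs at this <;> omega

open Classical in
theorem exists_law {α : Type*} {X : Set α} {D : Set (α → α → Prop)} (hD : IsCondorcetDomain X D)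
    {r0 : α → α → Prop} (hr0 : r0 ∈ D) {a b c : α} (ha : a ∈ X) (hb : b ∈ X) (hc : c ∈ X)
    (hab : r0 a b) (hbc : r0 b c) (nab : a ≠ b) (nac : a ≠ c) (nbc : b ≠ c) :
    ∃ l < 6, ∀ r ∈ D, okPat l (decide (r a b)) (decide (r a c)) (decide (r b c)) = true := by
  have tr : ∀ r ∈ D, acy (decide (r a b)) (decide (r a c)) (decide (r b c)) = true := by
    intro r hr
    obtain ⟨-, hi, ht, hto⟩ := hD.1 r hr
    have e1 := ht a ha b hb c hc
    have e2 : r a c → r b c ∨ r a b := by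
      intro hac
      by_contra hcon
      push Not at hcon
      have hcb := (hto b hb c hc nbc).resolve_left hcon.1
      exact hcon.2 (ht a ha c hc b hb hac hcb)
    unfold acy
    by_cases x : r a b <;> by_cases y : r a c <;> by_cases z : r b c <;> simp_all
  have cb : ∀ r ∈ D, ¬ r b c → r c b := fun r hr h =>
    ((hD.1 r hr).2.2.2 b hb c hc nbc).resolve_left h
  have bc : ∀ r ∈ D, r b c → ¬ r c b := fun r hr h h' =>
    (hD.1 r hr).2.1 b hb ((hD.1 r hr).2.2.1 b hb c hc b hb h h')
  -- even patterns
  have E : (∀ r ∈ D, ¬ (¬ r a b ∧ ¬ r a c ∧ r b c)) ∨ (∀ r ∈ D, ¬ (r a b ∧ ¬ r a c ∧ ¬ r b c)) := by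
    by_contra hcon
    push Not at hcon
    obtain ⟨⟨s, hs, s1, s2, s3⟩, ⟨q, hq, q1, q2, q3⟩⟩ := hcon
    exact no_cycle hD ha hb hc hr0 hq hs hab hbc q1 q2 s3 s2
  have O : (∀ r ∈ D, ¬ (r a b ∧ r a c ∧ ¬ r b c)) ∨ (∀ r ∈ D, ¬ (¬ r a b ∧ r a c ∧ r b c)) ∨
      (∀ r ∈ D, ¬ (¬ r a b ∧ ¬ r a c ∧ ¬ r b c)) := by
    by_contra hcon
    push Not at hcon
    obtain ⟨⟨p, hp, p1, p2, p3⟩, ⟨q, hq, q1, q2, q3⟩, ⟨s, hs, s1, s2, s3⟩⟩ := hcon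
    exact no_cycle hD ha hc hb hp hq hs p2 (cb p hp p3) q2 q1 (cb s hs s3) s1
  rcases E with E | E <;> rcases O with O | O | O
  · refine ⟨0, by norm_num, fun r hr => ?_⟩
    have h1 := tr r hr; have h2 := E r hr; have h3 := O r hr
    unfold okPat; rw [h1]
    by_cases x : r a b <;> by_cases y : r a c <;> by_cases z : r b c <;> simp_all [Nat.blt] <;> rfl
  · refine ⟨1, by norm_num, fun r hr => ?_⟩
    have h1 := tr r hr; have h2 := E r hr; have h3 := O r hr
    unfold okPat; rw [h1]
    by_cases x : r a b <;> by_cases y : r a c <;> by_cases z : r b c <;> simp_all [Nat.blt] <;> rfl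
  · refine ⟨2, by norm_num, fun r hr => ?_⟩
    have h1 := tr r hr; have h2 := E r hr; have h3 := O r hr
    unfold okPat; rw [h1]
    by_cases x : r a b <;> by_cases y : r a c <;> by_cases z : r b c <;> simp_all [Nat.blt] <;> rfl
  · refine ⟨3, by norm_num, fun r hr => ?_⟩
    have h1 := tr r hr; have h2 := E r hr; have h3 := O r hr
    unfold okPat; rw [h1]
    by_cases x : r a b <;> by_cases y : r a c <;> by_cases z : r b c <;> simp_all [Nat.blt] <;> rfl
  · refine ⟨4, by norm_num, fun r hr => ?_⟩
    have h1 := tr r hr; have h2 := E r hr; have h3 := O r hr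
    unfold okPat; rw [h1]
    by_cases x : r a b <;> by_cases y : r a c <;> by_cases z : r b c <;> simp_all [Nat.blt] <;> rfl
  · refine ⟨5, by norm_num, fun r hr => ?_⟩
    have h1 := tr r hr; have h2 := E r hr; have h3 := O r hr
    unfold okPat; rw [h1]
    by_cases x : r a b <;> by_cases y : r a c <;> by_cases z : r b c <;> simp_all [Nat.blt] <;> rfl

theorem exists_sorted {α : Type*} {X : Set α} {r : α → α → Prop} (hr : IsLinearOrderOn X r) :
    ∀ (n : ℕ) (Y : Finset α), (↑Y : Set α) ⊆ X → Y.card = n →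
      ∃ l : List α, l.length = n ∧ (∀ a ∈ l, a ∈ Y) ∧ l.Pairwise r := by
  classical
  intro n
  induction n with
  | zero => intro Y _ _; exact ⟨[], rfl, by simp, List.Pairwise.nil⟩
  | succ n ih =>
    intro Y hY hc
    have hne : Y.Nonempty := Finset.card_pos.1 (by omega)
    have hmin : ∀ Z : Finset α, Z.Nonempty → (↑Z : Set α) ⊆ X →
        ∃ a ∈ Z, ∀ b ∈ Z, b ≠ a → r a b := by
      intro Z hZ
      induction hZ using Finset.Nonempty.cons_induction with
      | singleton a => intro _; exact ⟨a, by simp, by simp⟩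
      | cons a Z ha hZ ih2 =>
        intro hs
        have haX : a ∈ X := hs (by simp)
        have hZX : (↑Z : Set α) ⊆ X := fun x hx => hs (by simp at hx; simp [hx])
        obtain ⟨m, hm, hmm⟩ := ih2 hZX
        have hma : m ≠ a := fun h => ha (h ▸ hm)
        rcases hr.2.2.2 m (hZX hm) a haX hma with h | h
        · refine ⟨m, by simp [hm], fun b hb hbm => ?_⟩
          rcases Finset.mem_cons.1 hb with rfl | hb
          · exact h
          · exact hmm b hb hbm
        · refine ⟨a, by simp, fun b hb hba => ?_⟩
          have hb := (Finset.mem_cons.1 hb).resolve_left hba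
          by_cases hbm : b = m
          · exact hbm ▸ h
          · exact hr.2.2.1 a haX m (hZX hm) b (hZX hb) h (hmm b hb hbm)
    obtain ⟨a, ha, hmin⟩ := hmin Y hne hY
    obtain ⟨l, hl, hlm, hlp⟩ := ih (Y.erase a)
      (fun x hx => hY (Finset.mem_of_mem_erase hx)) (by rw [Finset.card_erase_of_mem ha]; omega)
    refine ⟨a :: l, by simp [hl], ?_, ?_⟩
    · intro b hb
      rcases List.mem_cons.1 hb with rfl | hb
      · exact ha
      · exact Finset.mem_of_mem_erase (hlm b hb)
    · refine List.Pairwise.cons (fun b hb => ?_) hlp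
      exact hmin b (Finset.mem_of_mem_erase (hlm b hb)) (Finset.ne_of_mem_erase (hlm b hb))

def pfst (q : ℕ) : ℕ := [0, 0, 1, 0, 1, 2, 0, 1, 2, 3].getD q 0
def psnd (q : ℕ) : ℕ := [1, 2, 2, 3, 3, 3, 4, 4, 4, 4].getD q 0

theorem chk_pq : ∀ j < 5, ∀ i < j, pq i j < 10 ∧ pfst (pq i j) = i ∧ psnd (pq i j) = j := by
  decide

open Classical in
noncomputable def codeOf {α : Type*} (g : ℕ → α) (r : α → α → Prop) : ℕ :=
  Nat.ofBits (fun q : Fin 10 => decide (r (g (pfst q)) (g (psnd q))))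

open Classical in
theorem codeOf_bit {α : Type*} (g : ℕ → α) (r : α → α → Prop) (i j : ℕ) (hj : j < 5) (hi : i < j) :
    (codeOf g r).testBit (pq i j) = decide (r (g i) (g j)) := by
  obtain ⟨h1, h2, h3⟩ := chk_pq j hj i hi
  unfold codeOf
  rw [Nat.testBit_ofBits_lt _ _ h1]
  simp only [h2, h3]

open Classical in
theorem five_dom {α : Type*} {X : Set α} {D : Set (α → α → Prop)} (hD : IsDomainOn X D)
    (hbig : ∀ A : Set α, A ⊆ X → A.ncard = 5 → 19 ≤ (restrictDom A D).ncard)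
    (g : ℕ → α) (hgX : ∀ i < 5, g i ∈ X) (hg : ∀ j < 5, ∀ i < j, g i ≠ g j)
    (f : ℕ → ℕ) (hf : ∀ p < 10, f p < 6)
    (hok : ∀ p < 10, ∀ r ∈ D, okPat (f p)
      (decide (r (g (trip5.getD p (0, 0, 0)).1) (g (trip5.getD p (0, 0, 0)).2.1)))
      (decide (r (g (trip5.getD p (0, 0, 0)).1) (g (trip5.getD p (0, 0, 0)).2.2)))
      (decide (r (g (trip5.getD p (0, 0, 0)).2.1) (g (trip5.getD p (0, 0, 0)).2.2))) = true) :
    ∃ i, i < 248 ∧ ∀ p < 10, (ent p (f p)).2.testBit i = true := by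
  set A : Set α := g '' (↑(Finset.range 5) : Set ℕ) with hA
  have hmemA : ∀ i < 5, g i ∈ A := fun i hi => ⟨i, by simpa using hi, rfl⟩
  have hinj : Set.InjOn g (↑(Finset.range 5) : Set ℕ) := by
    intro i hi j hj hij
    have hi : i < 5 := by simpa using hi
    have hj : j < 5 := by simpa using hj
    rcases lt_trichotomy i j with h | h | h
    · exact absurd hij (hg j hj i h)
    · exact h
    · exact absurd hij.symm (hg i hi j h)
  have hAX : A ⊆ X := by
    rintro _ ⟨i, hi, rfl⟩
    exact hgX i (by simpa using hi)
  have hAc : A.ncard = 5 := by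
    rw [hA, Set.InjOn.ncard_image hinj, Set.ncard_coe_finset, Finset.card_range]
  have hge := hbig A hAX hAc
  have hcode : ∀ r, codeOf g (restrictRel A r) = codeOf g r := by
    intro r
    unfold codeOf
    congr 1
    funext q
    have h1 : pfst q < 5 ∧ psnd q < 5 := by
      revert q; decide
    simp [restrictRel, hmemA _ h1.1, hmemA _ h1.2]
  have hcinj : Set.InjOn (codeOf g) (restrictDom A D) := by
    rintro _ ⟨r, hr, rfl⟩ _ ⟨r', hr', rfl⟩ heq
    rw [hcode, hcode] at heq
    have key : ∀ j < 5, ∀ i < j, (r (g i) (g j) ↔ r' (g i) (g j)) := by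
      intro j hj i hi
      have h1 := codeOf_bit g r i j hj hi
      rw [heq, codeOf_bit g r' i j hj hi] at h1
      exact (decide_eq_decide.1 h1).symm
    have flip : ∀ r ∈ D, ∀ j < 5, ∀ i < j, (r (g j) (g i) ↔ ¬ r (g i) (g j)) := by
      intro r hr j hj i hi
      obtain ⟨-, hir, htr, hto⟩ := hD r hr
      have hiX := hgX i (by omega)
      have hjX := hgX j hj
      constructor
      · intro h h'
        exact hir _ hiX (htr _ hiX _ hjX _ hiX h' h)
      · intro h
        exact (hto _ hiX _ hjX (hg j hj i hi)).resolve_left h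
    funext x y
    unfold restrictRel
    apply propext
    refine and_congr_right fun hx => and_congr_right fun hy => ?_
    obtain ⟨i, hi, rfl⟩ := hx
    obtain ⟨j, hj, rfl⟩ := hy
    have hi : i < 5 := by simpa using hi
    have hj : j < 5 := by simpa using hj
    rcases lt_trichotomy i j with h | h | h
    · exact key j hj i h
    · subst h
      exact iff_of_false ((hD r hr).2.1 _ (hgX i hi)) ((hD r' hr').2.1 _ (hgX i hi))
    · rw [flip r hr i hi j h, flip r' hr' i hi j h, key i hi j h]
  have hsub : codeOf g '' restrictDom A D ⊆
      (↑((Finset.range 1024).filter (fun c => ∀ p < 10, okAt c p (f p) = true)) : Set ℕ) := by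
    rintro _ ⟨_, ⟨r, hr, rfl⟩, rfl⟩
    rw [hcode]
    simp only [Finset.coe_filter, Finset.mem_range, Set.mem_ofPred_eq]
    refine ⟨Nat.ofBits_lt_two_pow _, fun p hp => ?_⟩
    obtain ⟨t1, t2, t3⟩ := chk_trip p hp
    unfold okAt
    rw [codeOf_bit g r _ _ (by omega) t1, codeOf_bit g r _ _ t3 (by omega),
      codeOf_bit g r _ _ t3 t2]
    exact hok p hp r hr
  refine five_level f hf ((Finset.range 1024).filter (fun c => ∀ p < 10, okAt c p (f p) = true))
    ?_ ?_
  · have h1 := Set.ncard_le_ncard hsub (Finset.finite_toSet _)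
    rw [Set.InjOn.ncard_image hcinj, Set.ncard_coe_finset] at h1
    omega
  · intro c hc
    have hc' := Finset.mem_coe.2 hc
    simp only [Finset.coe_filter, Finset.mem_range, Set.mem_ofPred_eq] at hc'
    exact hc'

/-- For `n ≥ 7`, no Condorcet domain on an `n`-element set is `(5,19)`-abundant:
it has a 5-element subset whose restriction contains at most 18 orders. -/
theorem no_five_nineteen_abundant {α : Type*} (X : Set α) (hX : X.Finite)
    (hXcard : 7 ≤ X.ncard) (D : Set (α → α → Prop)) (hD : IsCondorcetDomain X D) :
    ∃ A : Set α, A ⊆ X ∧ A.ncard = 5 ∧ (restrictDom A D).ncard ≤ 18 := by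
  classical
  by_contra hcon
  have hbig : ∀ A : Set α, A ⊆ X → A.ncard = 5 → 19 ≤ (restrictDom A D).ncard := by
    intro A h1 h2
    by_contra h3
    exact hcon ⟨A, h1, h2, by omega⟩
  obtain ⟨Y, hYX, hYc⟩ := Set.exists_subset_card_eq hXcard
  have hYf : Y.Finite := hX.subset hYX
  have hDne : D.Nonempty := by
    by_contra hne
    rw [Set.not_nonempty_iff_eq_empty] at hne
    obtain ⟨Z, hZX, hZc⟩ := Set.exists_subset_card_eq (show 5 ≤ X.ncard by omega)
    have := hbig Z hZX hZc
    rw [hne] at this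
    simp [restrictDom] at this
  obtain ⟨r0, hr0⟩ := hDne
  obtain ⟨l, hl, hlm, hlp⟩ := exists_sorted (hD.1 r0 hr0) 7 hYf.toFinset (by simpa using hYX)
    (by rw [← Set.ncard_eq_toFinset_card Y hYf, hYc])
  have hlX : ∀ a ∈ l, a ∈ X := fun a ha => hYX (by simpa using hlm a ha)
  have hne : l ≠ [] := by
    rintro rfl
    simp at hl
  set e : ℕ → α := fun i => l.getD i (l.head hne) with he
  have heg : ∀ i (hi : i < 7), e i = l[i]'(by omega) := fun i hi =>
    List.getD_eq_getElem _ _ (by omega)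
  have heX : ∀ i < 7, e i ∈ X := by
    intro i hi
    rw [heg i hi]
    exact hlX _ (List.getElem_mem _)
  have her : ∀ j < 7, ∀ i < j, r0 (e i) (e j) := by
    intro j hj i hi
    rw [heg i (by omega), heg j hj]
    exact List.pairwise_iff_getElem.1 hlp i j _ _ hi
  have hen : ∀ j < 7, ∀ i < j, e i ≠ e j := by
    intro j hj i hi h
    have h1 := her j hj i hi
    rw [h] at h1
    exact (hD.1 r0 hr0).2.1 _ (heX j hj) h1
  have hlaw : ∀ i j k, ∃ w < 6, i < j → j < k → k < 7 → ∀ r ∈ D,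
      okPat w (decide (r (e i) (e j))) (decide (r (e i) (e k))) (decide (r (e j) (e k))) = true := by
    intro i j k
    by_cases h : i < j ∧ j < k ∧ k < 7
    · obtain ⟨h1, h2, h3⟩ := h
      obtain ⟨w, hw, hw2⟩ := exists_law hD hr0 (heX i (by omega)) (heX j (by omega)) (heX k h3)
        (her j (by omega) i h1) (her k h3 j h2) (hen j (by omega) i h1) (hen k h3 i (by omega))
        (hen k h3 j h2)
      exact ⟨w, hw, fun _ _ _ r hr => by convert hw2 r hr⟩
    · exact ⟨0, by norm_num, fun h1 h2 h3 => absurd ⟨h1, h2, h3⟩ h⟩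
  choose lw hlw6 hlw using hlaw
  refine seven_level lw hlw6 fun s hs => ?_
  refine five_dom hD.1 hbig (fun i => e (subEl s i)) (fun i hi => heX _ (chk_sub s hs i hi).1)
    (fun j hj i hi => hen _ (chk_sub s hs j hj).1 _ ((chk_sub s hs j hj).2 i hi))
    (fun p => lw (subEl s (trip5.getD p (0, 0, 0)).1) (subEl s (trip5.getD p (0, 0, 0)).2.1)
        (subEl s (trip5.getD p (0, 0, 0)).2.2)) (fun p _ => hlw6 _ _ _) ?_
  intro p hp r hr
  obtain ⟨t1, t2, t3⟩ := chk_trip p hp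
  have h2 := chk_sub s hs _ t3
  have h1 := chk_sub s hs _ (t2.trans t3)
  convert hlw _ _ _ (h1.2 _ t1) (h2.2 _ t2) h2.1 r hr
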